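/- arXiv:2605.07523 — 12 statements merged into one kernel-verified Lean document; each statement's English description precedes it below -/
import Mathlib

section
/- Let F be a finite family of axis-aligned rectangles in ℝ². A point p' ∈ ℝ² belongs to the inner Pareto front IPF(F) if and only if p' is dominated by the bottom-left corner of some region of F. In other words, for rectangles the inner Pareto front corresponds exactly to the open area strictly below the staircase of the Pareto front of the bottom-left corners. -/
/-- An axis-aligned rectangle `[x₁,x₂] × [y₁,y₂]` with `x₁ ≤ x₂` and `y₁ ≤ y₂`. -/
structure Rect where
  x1 : ℝ
  x2 : ℝ
  y1 : ℝ
  y2 : ℝ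
  hx : x1 ≤ x2
  hy : y1 ≤ y2

/-- The set of points of a rectangle. -/
def Rect.toSet (R : Rect) : Set (ℝ × ℝ) := Set.Icc R.x1 R.x2 ×ˢ Set.Icc R.y1 R.y2

/-- The top-right corner of a rectangle. -/
def Rect.tr (R : Rect) : ℝ × ℝ := (R.x2, R.y2)

/-- The bottom-left corner of a rectangle. -/
def Rect.bl (R : Rect) : ℝ × ℝ := (R.x1, R.y1)

/-- A rectangle is a point region if it is degenerate in both coordinates. -/
def Rect.isPoint (R : Rect) : Prop := R.x1 = R.x2 ∧ R.y1 = R.y2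

/-- The top facet `[x₁,x₂] × {y₂}` of a rectangle. -/
def Rect.topFacet (R : Rect) : Set (ℝ × ℝ) := Set.Icc R.x1 R.x2 ×ˢ ({R.y2} : Set ℝ)

/-- The right facet `{x₂} × [y₁,y₂]` of a rectangle. -/
def Rect.rightFacet (R : Rect) : Set (ℝ × ℝ) := ({R.x2} : Set ℝ) ×ˢ Set.Icc R.y1 R.y2

/-- `p` dominates `q` if `p` lies in the open top-right quadrant of `q`. -/
def dom (p q : ℝ × ℝ) : Prop := q.1 < p.1 ∧ q.2 < p.2

/-- `p` dominates a rectangle `R` if it dominates every point of `R`. -/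
def domR (p : ℝ × ℝ) (R : Rect) : Prop := ∀ q ∈ R.toSet, dom p q

/-- `P` is a realization of the family `F`. -/
def IsRealization {n : ℕ} (F : Fin n → Rect) (P : Fin n → ℝ × ℝ) : Prop :=
  ∀ i, P i ∈ (F i).toSet

/-- The outer Pareto front: indices `a` such that some point of `R_a` is dominated by no
point of any other region. -/
def OPF {n : ℕ} (F : Fin n → Rect) : Set (Fin n) :=
  {a | ∃ p ∈ (F a).toSet, ∀ b, b ≠ a → ∀ q ∈ (F b).toSet, ¬ dom q p}

/-- The inner Pareto front: points dominated in every realization of `F`. -/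
def IPF {n : ℕ} (F : Fin n → Rect) : Set (ℝ × ℝ) :=
  {p' | ∀ P : Fin n → ℝ × ℝ, IsRealization F P → ∃ i, dom (P i) p'}

/-- The degenerate rectangle consisting of a single point. -/
def pointRect (p : ℝ × ℝ) : Rect := ⟨p.1, p.1, p.2, p.2, le_rfl, le_rfl⟩

open Classical in
/-- The family `F ⊙ A`: regions with index in `A` are retrieved, i.e. replaced by
the point region of the corresponding point of the realization `P`. -/
noncomputable def retrieve {n : ℕ} (F : Fin n → Rect) (P : Fin n → ℝ × ℝ)
    (A : Set (Fin n)) : Fin n → Rect :=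
  fun i => if i ∈ A then pointRect (P i) else F i

/-- `q` witnesses an outgoing dependency of `R_a` to `R_b`:
`q ∈ R_b`, (I) the top-right corner of `R_b` does not dominate `R_a`,
(II) `q ∉ IPF F`, and (III) `q ∈ R_a` or the top-right corner of `R_a` dominates `q`. -/
def depWitness {n : ℕ} (F : Fin n → Rect) (a b : Fin n) (q : ℝ × ℝ) : Prop :=
  q ∈ (F b).toSet ∧ ¬ domR (F b).tr (F a) ∧ q ∉ IPF F ∧
    (q ∈ (F a).toSet ∨ dom (F a).tr q)

/-- `R_a` has an outgoing dependency in `F` to `R_b`. -/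
def outDep {n : ℕ} (F : Fin n → Rect) (a b : Fin n) : Prop :=
  a ≠ b ∧ ∃ q, depWitness F a b q

/-- `R_a` is independent in `F` if it has no outgoing dependency to any region. -/
def indep {n : ℕ} (F : Fin n → Rect) (a : Fin n) : Prop := ∀ b, ¬ outDep F a b

/-- The outer Pareto front of the subfamily of `F` with indices in `S`. -/
def OPFon {n : ℕ} (F : Fin n → Rect) (S : Set (Fin n)) : Set (Fin n) :=
  {a | a ∈ S ∧ ∃ p ∈ (F a).toSet, ∀ b ∈ S, b ≠ a → ∀ q ∈ (F b).toSet, ¬ dom q p}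

/-- The regions remaining after removing the first `i` layers. -/
def remaining {n : ℕ} (F : Fin n → Rect) : ℕ → Set (Fin n)
  | 0 => Set.univ
  | i + 1 => remaining F i \ OPFon F (remaining F i)

/-- The `i`-th layer (0-indexed): the outer Pareto front of what remains after
removing the previous layers. -/
def layer {n : ℕ} (F : Fin n → Rect) (i : ℕ) : Set (Fin n) := OPFon F (remaining F i)

/-- Points dominated by no point of `S`. -/
def USet (S : Set (ℝ × ℝ)) : Set (ℝ × ℝ) := {p | ∀ s ∈ S, ¬ dom s p}

/-- The staircase of `S`: the topological boundary of `USet S`. -/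
def staircase (S : Set (ℝ × ℝ)) : Set (ℝ × ℝ) := frontier (USet S)

/-- `R_a` is dominated in `F`: in every realization of `F`, the point of `R_a`
is dominated by the point of some other region. -/
def dominatedIn {n : ℕ} (F : Fin n → Rect) (a : Fin n) : Prop :=
  ∀ Q : Fin n → ℝ × ℝ, IsRealization F Q → ∃ b, b ≠ a ∧ dom (Q b) (Q a)

/-- The permutation `σ` is realizable for the intervals `[a i, b i]`. -/
def realizable (k : ℕ) (a b : Fin k → ℝ) (σ : Equiv.Perm (Fin k)) : Prop :=
  ∃ z : Fin k → ℝ, Function.Injective z ∧ (∀ i, z i ∈ Set.Icc (a i) (b i)) ∧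
    StrictMono (fun i => z (σ i))

/-- The partial order along the Pareto front of the point sequence `P`:
`a ≺ b` iff both `P a` and `P b` lie on the Pareto front of `P` and `P a`
lies strictly to the left of, or strictly above, `P b`. -/
def precRel {n : ℕ} (P : Fin n → ℝ × ℝ) (a b : Fin n) : Prop :=
  (∀ c, c ≠ a → ¬ dom (P c) (P a)) ∧ (∀ c, c ≠ b → ¬ dom (P c) (P b)) ∧
    ((P a).1 < (P b).1 ∨ (P b).2 < (P a).2)

/-- A point belongs to the inner Pareto front of a family of rectangles iff
it is dominated by the bottom-left corner of some region. -/
theorem stmt1 {n : ℕ} (F : Fin n → Rect) (p' : ℝ × ℝ) :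
    p' ∈ IPF F ↔ ∃ a : Fin n, dom (F a).bl p' := by
  constructor
  · intro h
    exact h (fun i => (F i).bl)
      (fun i => ⟨⟨le_rfl, (F i).hx⟩, ⟨le_rfl, (F i).hy⟩⟩)
  · rintro ⟨a, h1, h2⟩ P hP
    exact ⟨a, lt_of_lt_of_le h1 (hP a).1.1, lt_of_lt_of_le h2 (hP a).2.1⟩
end

section
/- Let F⁰ be a finite family of axis-aligned rectangles such that no region of F⁰ is contained in IPF(F⁰), let P ∼ F⁰, and let F = F⁰ ⊙ A for some subset A ⊆ F⁰ of retrieved regions. Let R_a be a region that is independent in F⁰ and let p_a ∈ R_a. Then retrieving R_a does not cause any non-point region to appear on the outer Pareto front: for every non-point region R_b ∈ F with b ≠ a, if R_b ∉ OPF(F) then R_b ∉ OPF(F ⊙ {R_a}). -/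
/-- Retrieving an independent region never causes a non-point region to
appear on the outer Pareto front. -/
theorem stmt2 {n : ℕ} (F0 : Fin n → Rect) (P : Fin n → ℝ × ℝ) (A : Set (Fin n))
    (hF0 : ∀ i, ¬ (F0 i).toSet ⊆ IPF F0)
    (hP : IsRealization F0 P)
    (a : Fin n) (ha : indep F0 a)
    (b : Fin n) (hba : b ≠ a)
    (hbpt : ¬ (retrieve F0 P A b).isPoint)
    (hbnot : b ∉ OPF (retrieve F0 P A)) :
    b ∉ OPF (retrieve F0 P (A ∪ {a})) := by
  classical
  have hbA : b ∉ A := by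
    intro h
    apply hbpt
    simp [retrieve, h, pointRect, Rect.isPoint]
  have hFb : retrieve F0 P A b = F0 b := by simp [retrieve, hbA]
  have hFb2 : retrieve F0 P (A ∪ {a}) b = F0 b := by simp [retrieve, hbA, hba]
  rintro ⟨p, hp, hpd⟩
  rw [hFb2] at hp
  apply hbnot
  refine ⟨(F0 b).tr, ?_, ?_⟩
  · rw [hFb]
    exact ⟨⟨(F0 b).hx, le_rfl⟩, ⟨(F0 b).hy, le_rfl⟩⟩
  · intro c hc q hq hd
    by_cases hca : c = a ∧ a ∉ A
    · obtain ⟨rfl, hcA⟩ := hca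
      have hq' : q ∈ (F0 c).toSet := by simpa [retrieve, hcA] using hq
      apply hF0 b
      intro r hr
      by_contra hrI
      apply ha b
      refine ⟨hc, r, hr, ?_, hrI, Or.inr ?_⟩
      · intro h
        have := (h q hq').1
        exact lt_asymm this hd.1
      · exact ⟨(hr.1.2.trans_lt hd.1).trans_le hq'.1.2, (hr.2.2.trans_lt hd.2).trans_le hq'.2.2⟩
    · have hEq : retrieve F0 P (A ∪ {a}) c = retrieve F0 P A c := by
        by_cases h : c = a
        · have hA : a ∈ A := by
            by_contra h2
            exact hca ⟨h, h2⟩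
          simp [retrieve, h, hA]
        · simp [retrieve, h]
      apply hpd c hc q (by rw [hEq]; exact hq)
      exact ⟨hp.1.2.trans_lt hd.1, hp.2.2.trans_lt hd.2⟩
end

section
/- Let G be a finite family of axis-aligned rectangles with layers G₁, G₂, …, G_k. If R_a ∈ Gᵢ and R_b ∈ G_j are distinct regions with j ≥ i, then no point p ∈ R_b dominates the region R_a; equivalently, no point of R_b dominates the top-right corner of R_a. -/
/-- If `R_a` is in layer `i` and `R_b` is in layer `j` with `j ≥ i`,
then no point of `R_b` dominates the region `R_a`; equivalently, no point of `R_b`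
dominates the top-right corner of `R_a`. -/
theorem stmt3 {n : ℕ} (G : Fin n → Rect) (i j : ℕ) (hij : i ≤ j)
    (a b : Fin n) (hab : a ≠ b) (ha : a ∈ layer G i) (hb : b ∈ layer G j)
    (p : ℝ × ℝ) (hp : p ∈ (G b).toSet) :
    ¬ domR p (G a) ∧ ¬ dom p (G a).tr := by
  have hmono : Antitone (remaining G) :=
    antitone_nat_of_succ_le fun k => Set.diff_subset
  obtain ⟨_, q, hq, hall⟩ := ha
  have key : ¬ dom p q := hall b (hmono hij hb.1) hab.symm p hp
  refine ⟨fun h => key (h q hq), fun h => key ?_⟩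
  obtain ⟨⟨_, h1⟩, ⟨_, h2⟩⟩ := hq
  exact ⟨lt_of_le_of_lt h1 h.1, lt_of_le_of_lt h2 h.2⟩
end

section
/- Let S be a finite nonempty point set in ℝ² with staircase C(S), and let p_a, p_b ∈ ℝ² be two points. Let I_{p_a} = {c ∈ C(S) : p_a dominates c} and I_{p_b} = {c ∈ C(S) : p_b dominates c}, and suppose both sets are nonempty, I_{p_a} ∩ I_{p_b} = ∅, and some point of I_{p_a} has x-coordinate at most the x-coordinate of some point of I_{p_b}. Then there exists a point s ∈ S lying on C(S) that is dominated by neither p_a nor p_b and satisfies c.x ≤ s.x for every c ∈ I_{p_a} and s.x ≤ c'.x for every c' ∈ I_{p_b}; that is, there is a maximal point of S on the staircase between the two dominated intervals. -/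
lemma USet_closed (S : Finset (ℝ × ℝ)) : IsClosed (USet (S : Set (ℝ × ℝ))) := by
  have : USet (S : Set (ℝ × ℝ)) = ⋂ s ∈ (S : Set (ℝ × ℝ)), {p : ℝ × ℝ | s.1 ≤ p.1 ∨ s.2 ≤ p.2} := by
    ext p
    simp only [USet, dom, Set.mem_ofPred_eq, Set.mem_iInter, not_and_or, not_lt]
  rw [this]
  refine isClosed_biInter fun s _ => ?_
  exact (isClosed_le continuous_const continuous_fst).union
    (isClosed_le continuous_const continuous_snd)

lemma not_dom_of_mem (S : Finset (ℝ × ℝ)) {c : ℝ × ℝ} (hc : c ∈ staircase (S : Set (ℝ × ℝ))) :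
    ∀ s ∈ S, ¬ dom s c := by
  have : c ∈ USet (S : Set (ℝ × ℝ)) := (USet_closed S).frontier_subset hc
  exact fun s hs => this s (Finset.mem_coe.2 hs)

lemma mem_stair (S : Finset (ℝ × ℝ)) {c s : ℝ × ℝ} (hs : s ∈ S) (h1 : c.1 ≤ s.1) (h2 : c.2 ≤ s.2)
    (hc : ∀ s ∈ S, ¬ dom s c) : c ∈ staircase (S : Set (ℝ × ℝ)) := by
  refine ⟨subset_closure fun s hs => hc s (Finset.mem_coe.1 hs), fun hi => ?_⟩
  rw [mem_interior_iff_mem_nhds, Metric.mem_nhds_iff] at hi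
  obtain ⟨e, he, hb⟩ := hi
  have hm : (c.1 - e / 2, c.2 - e / 2) ∈ Metric.ball c e := by
    rw [Metric.mem_ball, Prod.dist_eq, max_lt_iff]
    simp only [Real.dist_eq]
    constructor <;> (rw [abs_lt]; constructor <;> linarith)
  refine hb hm s (Finset.mem_coe.2 hs) ⟨?_, ?_⟩ <;> simp only <;> linarith

/-- If the staircase intervals dominated by `p_a` and by `p_b` are nonempty,
disjoint, and the first lies (partly) to the left of the second, then there is a maximal
point of `S` on the staircase between the two dominated intervals. -/
theorem stmt4 (S : Finset (ℝ × ℝ)) (hS : S.Nonempty) (pa pb : ℝ × ℝ)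
    (hIa : ∃ c ∈ staircase (S : Set (ℝ × ℝ)), dom pa c)
    (hIb : ∃ c ∈ staircase (S : Set (ℝ × ℝ)), dom pb c)
    (hdisj : ∀ c ∈ staircase (S : Set (ℝ × ℝ)), ¬ (dom pa c ∧ dom pb c))
    (horder : ∃ c ∈ staircase (S : Set (ℝ × ℝ)), ∃ c' ∈ staircase (S : Set (ℝ × ℝ)),
      dom pa c ∧ dom pb c' ∧ c.1 ≤ c'.1) :
    ∃ s ∈ S, s ∈ staircase (S : Set (ℝ × ℝ)) ∧ ¬ dom pa s ∧ ¬ dom pb s ∧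
      (∀ c ∈ staircase (S : Set (ℝ × ℝ)), dom pa c → c.1 ≤ s.1) ∧
      (∀ c' ∈ staircase (S : Set (ℝ × ℝ)), dom pb c' → s.1 ≤ c'.1) := by
  obtain ⟨c0, hc0, d0, hd0, hac, hbd, hcd⟩ := horder
  have hkey : ∃ s ∈ S, min pa.1 pb.1 ≤ s.1 ∧ min pa.2 pb.2 ≤ s.2 := by
    by_contra hcon
    push Not at hcon
    obtain ⟨s, hs, hmax⟩ := S.exists_max_image
      (fun s => min (s.1 - min pa.1 pb.1) (s.2 - min pa.2 pb.2)) hS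
    obtain ⟨m, hm⟩ : ∃ m, m = min (s.1 - min pa.1 pb.1) (s.2 - min pa.2 pb.2) := ⟨_, rfl⟩
    have hneg : m < 0 := by
      rw [hm, min_lt_iff]
      by_cases h : min pa.1 pb.1 ≤ s.1
      · right; linarith [hcon s hs h]
      · left; linarith
    have hl := min_le_left (s.1 - min pa.1 pb.1) (s.2 - min pa.2 pb.2)
    have hr := min_le_right (s.1 - min pa.1 pb.1) (s.2 - min pa.2 pb.2)
    rw [← hm] at hl hr
    have e1 := min_le_left pa.1 pb.1
    have e2 := min_le_right pa.1 pb.1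
    have e3 := min_le_left pa.2 pb.2
    have e4 := min_le_right pa.2 pb.2
    refine hdisj (min pa.1 pb.1 + m, min pa.2 pb.2 + m)
      (mem_stair S hs (by simp only; linarith) (by simp only; linarith) ?_) ?_
    · rintro t ht ⟨h1, h2⟩
      simp only at h1 h2
      have h := hmax t ht
      rw [← hm] at h
      have : m < min (t.1 - min pa.1 pb.1) (t.2 - min pa.2 pb.2) :=
        lt_min (by linarith) (by linarith)
      linarith
    · refine ⟨⟨?_, ?_⟩, ?_, ?_⟩ <;> simp only <;> linarith
  obtain ⟨s, hs, hmax⟩ := (S.filter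
      (fun s => min pa.1 pb.1 ≤ s.1 ∧ min pa.2 pb.2 ≤ s.2)).exists_max_image
      (fun s => s.1 + s.2) (by
        obtain ⟨s, hs, h⟩ := hkey
        exact ⟨s, Finset.mem_filter.2 ⟨hs, h⟩⟩)
  obtain ⟨hsS, hq1, hq2⟩ := Finset.mem_filter.1 hs
  have hst : s ∈ staircase (S : Set (ℝ × ℝ)) := by
    refine mem_stair S hsS le_rfl le_rfl ?_
    rintro t ht ⟨h1, h2⟩
    have := hmax t (Finset.mem_filter.2 ⟨ht, by linarith, by linarith⟩)
    linarith
  have nc := not_dom_of_mem S hc0 s hsS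
  have nd := not_dom_of_mem S hd0 s hsS
  have dc := hdisj c0 hc0
  have dd := hdisj d0 hd0
  simp only [dom, min_le_iff] at *
  refine ⟨s, hsS, hst, ?_, ?_, ?_, ?_⟩
  · grind
  · grind
  · intro c hc hpc
    have := not_dom_of_mem S hc s hsS
    simp only [dom] at this
    grind
  · intro c hc hpc
    have := not_dom_of_mem S hc s hsS
    simp only [dom] at this
    grind
end

section
/- Let S be a finite nonempty point set in ℝ² with staircase C(S), and let p ∈ ℝ² be any point. Then the set {c ∈ C(S) : p dominates c} of staircase points dominated by p is a connected subset of ℝ²; that is, any point dominates a contiguous interval along the staircase. -/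
/-- Signed diagonal distance from `c` to the staircase of `S`. -/
noncomputable def diagH (S : Finset (ℝ × ℝ)) (hS : S.Nonempty) (c : ℝ × ℝ) : ℝ :=
  S.sup' hS (fun s => min (s.1 - c.1) (s.2 - c.2))

lemma diagH_cont (S : Finset (ℝ × ℝ)) (hS : S.Nonempty) : Continuous (diagH S hS) := by
  unfold diagH
  apply Continuous.finset_sup'_apply
  intro s _
  fun_prop

lemma diagH_le (S : Finset (ℝ × ℝ)) (hS : S.Nonempty) (c : ℝ × ℝ) (r : ℝ) :
    diagH S hS c ≤ r ↔ ∀ s ∈ S, s.1 - c.1 ≤ r ∨ s.2 - c.2 ≤ r := by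
  simp only [diagH, Finset.sup'_le_iff, min_le_iff]

lemma diagH_shift (S : Finset (ℝ × ℝ)) (hS : S.Nonempty) (c : ℝ × ℝ) (t : ℝ) :
    diagH S hS (c.1 + t, c.2 + t) = diagH S hS c - t := by
  apply eq_of_forall_ge_iff
  intro r
  rw [diagH_le, sub_le_iff_le_add, diagH_le]
  refine forall₂_congr fun s _ => or_congr ?_ ?_ <;> constructor <;> intro h <;> dsimp at * <;>
    linarith

lemma USet_eq (S : Finset (ℝ × ℝ)) (hS : S.Nonempty) :
    USet (S : Set (ℝ × ℝ)) = {c | diagH S hS c ≤ 0} := by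
  ext c
  simp only [USet, dom, Set.mem_setOf_eq, diagH_le, Finset.mem_coe, not_and_or, not_lt,
    sub_nonpos]

lemma mem_staircase (S : Finset (ℝ × ℝ)) (hS : S.Nonempty) (c : ℝ × ℝ) :
    c ∈ staircase (S : Set (ℝ × ℝ)) ↔ diagH S hS c = 0 := by
  unfold staircase
  rw [USet_eq S hS]
  constructor
  · intro h
    exact frontier_le_subset_eq (diagH_cont S hS) continuous_const h
  · intro h
    rw [frontier_eq_closure_inter_closure]
    refine ⟨subset_closure h.le, ?_⟩
    have hf : Continuous (fun t : ℝ => (c.1 + t, c.2 + t)) := by fun_prop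
    have ht : Filter.Tendsto (fun t : ℝ => (c.1 + t, c.2 + t)) (nhdsWithin 0 (Set.Iio 0))
        (nhds c) := by
      have := hf.tendsto 0
      simp only [add_zero] at this
      exact this.mono_left nhdsWithin_le_nhds
    refine mem_closure_of_tendsto ht ?_
    filter_upwards [self_mem_nhdsWithin] with t ht
    have ht' : t < 0 := ht
    simp only [Set.mem_compl_iff, Set.mem_setOf_eq, diagH_shift, h]
    linarith

/-- Any point dominates a contiguous (connected) interval along the
staircase of a finite nonempty point set. -/
theorem stmt5 (S : Finset (ℝ × ℝ)) (hS : S.Nonempty) (p : ℝ × ℝ) :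
    IsPreconnected {c | c ∈ staircase (S : Set (ℝ × ℝ)) ∧ dom p c} := by
  have key : {c | c ∈ staircase (S : Set (ℝ × ℝ)) ∧ dom p c} =
      (fun d : ℝ => (d + diagH S hS (d, 0), diagH S hS (d, 0))) ''
        {d | d + diagH S hS (d, 0) < p.1 ∧ diagH S hS (d, 0) < p.2} := by
    ext c
    simp only [Set.mem_setOf_eq, Set.mem_image, mem_staircase S hS, dom]
    constructor
    · rintro ⟨h0, h1, h2⟩
      have h := diagH_shift S hS c (-c.2)
      rw [h0, add_neg_cancel, zero_sub, neg_neg, ← sub_eq_add_neg] at h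
      refine ⟨c.1 - c.2, ?_, ?_⟩
      · rw [h]; constructor <;> linarith
      · rw [h]; ext <;> simp
    · rintro ⟨d, ⟨h1, h2⟩, rfl⟩
      refine ⟨?_, h1, h2⟩
      have h := diagH_shift S hS (d, 0) (diagH S hS (d, 0))
      simpa using h
  rw [key]
  have hc : Continuous (fun d : ℝ => diagH S hS (d, 0)) :=
    (diagH_cont S hS).comp (by fun_prop)
  refine IsPreconnected.image ?_ _ (by fun_prop)
  apply Set.OrdConnected.isPreconnected
  refine ⟨?_⟩
  rintro a ⟨_, ha⟩ b ⟨hb, _⟩ d ⟨had, hdb⟩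
  constructor
  · have : diagH S hS (d, 0) ≤ (b - d) + diagH S hS (b, 0) := by
      rw [diagH_le]
      intro s hs
      rcases (diagH_le S hS (b, 0) _).1 le_rfl s hs with h | h
      · left; dsimp at *; linarith
      · right; dsimp at *; linarith
    linarith
  · have : diagH S hS (d, 0) ≤ diagH S hS (a, 0) := by
      rw [diagH_le]
      intro s hs
      rcases (diagH_le S hS (a, 0) _).1 le_rfl s hs with h | h
      · left; dsimp at *; linarith
      · right; dsimp at *; linarith
    linarith
end

section
/- Let F⁰ be a finite family of axis-aligned rectangles and let R_a, R_b ∈ F⁰ be distinct regions. Then R_a has an outgoing dependency in F⁰ to R_b if and only if there is a point q lying on the top facet or the right facet of R_b such that (I) the top-right corner of R_b does not dominate R_a, (II) q ∉ IPF(F⁰), and (III) q ∈ R_a or the top-right corner of R_a dominates q. -/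
/-- The real-coordinate core of the proof: a witness can be pushed up or right to a facet. -/
theorem push_aux (a1 a2 c1 c2 b1 b2 d1 d2 x y : ℝ) (_ : a1 ≤ a2) (_ : c1 ≤ c2)
    (hx : b1 ≤ x ∧ x ≤ b2) (hy : d1 ≤ y ∧ y ≤ d2) (h : b2 ≤ a2)
    (h3 : ((a1 ≤ x ∧ x ≤ a2) ∧ (c1 ≤ y ∧ y ≤ c2)) ∨ (x < a2 ∧ y < c2)) :
    ∃ u v, x ≤ u ∧ y ≤ v ∧ (((b1 ≤ u ∧ u ≤ b2) ∧ v = d2) ∨ (u = b2 ∧ (d1 ≤ v ∧ v ≤ d2))) ∧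
      (((a1 ≤ u ∧ u ≤ a2) ∧ (c1 ≤ v ∧ v ≤ c2)) ∨ (u < a2 ∧ v < c2)) := by
  rcases h3 with h3 | h3
  · exact ⟨b2, y, by grind⟩
  · rcases h.lt_or_eq with h | h
    · exact ⟨b2, y, by grind⟩
    · by_cases h4 : c1 ≤ y
      · exact ⟨b2, y, by grind⟩
      · by_cases h5 : c1 ≤ d2
        · exact ⟨b2, c1, by grind⟩
        · exact ⟨x, d2, by grind⟩

/-- `R_a` has an outgoing dependency to `R_b` iff some point on the top or
right facet of `R_b` satisfies conditions (I)-(III). -/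
theorem stmt9 {n : ℕ} (F : Fin n → Rect) (a b : Fin n) (hab : a ≠ b) :
    outDep F a b ↔
      ∃ q ∈ (F b).topFacet ∪ (F b).rightFacet,
        ¬ domR (F b).tr (F a) ∧ q ∉ IPF F ∧
          (q ∈ (F a).toSet ∨ dom (F a).tr q) := by
  constructor
  · rintro ⟨-, ⟨x, y⟩, hq, hI, hII, hIII⟩
    have hor : (F b).x2 ≤ (F a).x2 ∨ (F b).y2 ≤ (F a).y2 := by
      by_contra hc
      push Not at hc
      apply hI
      rintro ⟨p, r⟩ ⟨hp, hr⟩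
      exact ⟨lt_of_le_of_lt hp.2 hc.1, lt_of_le_of_lt hr.2 hc.2⟩
    have hup : ∀ u v, x ≤ u → y ≤ v → (u, v) ∉ IPF F := by
      intro u v hu hv hm
      apply hII
      intro P hP
      obtain ⟨i, hi⟩ := hm P hP
      exact ⟨i, lt_of_le_of_lt hu hi.1, lt_of_le_of_lt hv hi.2⟩
    simp only [Rect.toSet, Rect.tr, dom, Set.mem_prod, Set.mem_Icc] at hq hIII
    have key : ∃ u v, x ≤ u ∧ y ≤ v ∧
        ((((F b).x1 ≤ u ∧ u ≤ (F b).x2) ∧ v = (F b).y2) ∨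
          (u = (F b).x2 ∧ ((F b).y1 ≤ v ∧ v ≤ (F b).y2))) ∧
        ((((F a).x1 ≤ u ∧ u ≤ (F a).x2) ∧ ((F a).y1 ≤ v ∧ v ≤ (F a).y2)) ∨
          (u < (F a).x2 ∧ v < (F a).y2)) := by
      rcases hor with h | h
      · exact push_aux _ _ _ _ _ _ _ _ x y (F a).hx (F a).hy hq.1 hq.2 h hIII
      · obtain ⟨v, u, h1, h2, h3, h4⟩ := push_aux _ _ _ _ _ _ _ _ y x (F a).hy (F a).hx
          hq.2 hq.1 h (hIII.imp And.symm And.symm)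
        exact ⟨u, v, h2, h1, h3.symm.imp And.symm And.symm, h4.imp And.symm And.symm⟩
    obtain ⟨u, v, hu, hv, hf, h3⟩ := key
    exact ⟨(u, v), hf, hI, hup u v hu hv, h3⟩
  · rintro ⟨q, hq, h⟩
    refine ⟨hab, q, ?_, h⟩
    rcases hq with ⟨h1, h2⟩ | ⟨h1, h2⟩
    · exact ⟨h1, (F b).hy.trans_eq (Set.mem_singleton_iff.mp h2).symm, (Set.mem_singleton_iff.mp h2).le⟩
    · exact ⟨⟨(F b).hx.trans_eq (Set.mem_singleton_iff.mp h1).symm, (Set.mem_singleton_iff.mp h1).le⟩, h2⟩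
end

section
/- Let F⁰ be a finite family of axis-aligned rectangles none of which is contained in IPF(F⁰). For each R ∈ F⁰ let ℓ(R) be the leftmost point of the top facet of R that is not in IPF(F⁰), and let r(R) be the bottommost point of the right facet of R that is not in IPF(F⁰) (both exist since the top-right corner of R is not in IPF(F⁰)). Then for distinct R_a, R_b ∈ F⁰, the region R_a has an outgoing dependency in F⁰ to R_b if and only if either (1) the top-right corner of R_a dominates ℓ(R_b) or dominates r(R_b), or (2) the top facet or right facet of R_a intersects the top facet or right facet of R_b at a point not in IPF(F⁰). -/
theorem not_IPF_up {n : ℕ} (F : Fin n → Rect) {x y x' y' : ℝ} (h : (x, y) ∉ IPF F)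
    (hx : x ≤ x') (hy : y ≤ y') : (x', y') ∉ IPF F := by
  intro h'
  apply h
  intro P hP
  obtain ⟨i, h1, h2⟩ := h' P hP
  exact ⟨i, lt_of_le_of_lt hx h1, lt_of_le_of_lt hy h2⟩

/-- Characterization of outgoing dependencies via the representative points
`ℓ(R)` (leftmost point of the top facet not in the inner Pareto front) and `r(R)`
(bottommost point of the right facet not in the inner Pareto front). -/
theorem stmt10 {n : ℕ} (F : Fin n → Rect)
    (hF : ∀ i, ¬ (F i).toSet ⊆ IPF F)
    (l r : Fin n → ℝ × ℝ)
    (hl : ∀ i, l i ∈ (F i).topFacet ∧ l i ∉ IPF F ∧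
      ∀ q ∈ (F i).topFacet, q ∉ IPF F → (l i).1 ≤ q.1)
    (hr : ∀ i, r i ∈ (F i).rightFacet ∧ r i ∉ IPF F ∧
      ∀ q ∈ (F i).rightFacet, q ∉ IPF F → (r i).2 ≤ q.2)
    (a b : Fin n) (hab : a ≠ b) :
    outDep F a b ↔
      ((dom (F a).tr (l b) ∨ dom (F a).tr (r b)) ∨
        ∃ q, q ∈ (F a).topFacet ∪ (F a).rightFacet ∧
          q ∈ (F b).topFacet ∪ (F b).rightFacet ∧ q ∉ IPF F) := by
  constructor
  · rintro ⟨-, ⟨qx, qy⟩, hqb, hI, hq, hqa⟩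
    obtain ⟨⟨hb1, hb2⟩, hb3, hb4⟩ := hqb
    simp only at hb1 hb2 hb3 hb4
    obtain ⟨hl1, -, hl3⟩ := hl b
    obtain ⟨hr1, -, hr3⟩ := hr b
    obtain ⟨-, hl1⟩ := hl1
    obtain ⟨hr1, -⟩ := hr1
    simp only [Set.mem_singleton_iff] at hl1 hr1
    have hT : (qx, (F b).y2) ∉ IPF F := not_IPF_up F hq le_rfl hb4
    have hR : ((F b).x2, qy) ∉ IPF F := not_IPF_up F hq hb2 le_rfl
    have hlx : (l b).1 ≤ qx := hl3 (qx, (F b).y2) ⟨⟨hb1, hb2⟩, rfl⟩ hT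
    have hry : (r b).2 ≤ qy := hr3 ((F b).x2, qy) ⟨rfl, hb3, hb4⟩ hR
    have hle : qx ≤ (F a).x2 ∧ qy ≤ (F a).y2 := by
      rcases hqa with h | h
      · exact ⟨h.1.2, h.2.2⟩
      · exact ⟨h.1.le, h.2.le⟩
    have hnd : (F b).y2 ≤ (F a).y2 ∨ (F b).x2 ≤ (F a).x2 := by
      by_contra! hc
      exact hI fun p hp => ⟨lt_of_le_of_lt hp.1.2 hc.2, lt_of_le_of_lt hp.2.2 hc.1⟩
    rcases hnd with hy | hx
    · rcases hy.eq_or_lt with hy | hy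
      · by_cases h1 : (F a).x1 ≤ qx
        · exact Or.inr ⟨(qx, (F b).y2), Or.inl ⟨⟨h1, hle.1⟩, hy⟩,
            Or.inl ⟨⟨hb1, hb2⟩, rfl⟩, hT⟩
        · push Not at h1
          by_cases h2 : (F a).x1 ≤ (F b).x2
          · exact Or.inr ⟨((F a).x1, (F b).y2), Or.inl ⟨⟨le_rfl, (F a).hx⟩, hy⟩,
              Or.inl ⟨⟨hb1.trans h1.le, h2⟩, rfl⟩, not_IPF_up F hT h1.le le_rfl⟩
          · push Not at h2
            rcases hqa with h | h
            · exact absurd h.1.1 (not_le.2 h1)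
            · refine Or.inl (Or.inr ⟨?_, lt_of_le_of_lt hry h.2⟩)
              rw [hr1]
              exact lt_of_lt_of_le h2 (F a).hx
      · rcases hle.1.eq_or_lt with h1 | h1
        · rcases hqa with h | h
          · exact Or.inr ⟨(qx, (F b).y2), Or.inr ⟨h1, le_trans h.2.1 hb4, hy.le⟩,
              Or.inl ⟨⟨hb1, hb2⟩, rfl⟩, hT⟩
          · exact absurd h1 (ne_of_lt h.1)
        · refine Or.inl (Or.inl ⟨lt_of_le_of_lt hlx h1, ?_⟩)
          rw [hl1]
          exact hy
    · rcases hx.eq_or_lt with hx | hx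
      · by_cases h1 : (F a).y1 ≤ qy
        · exact Or.inr ⟨((F b).x2, qy), Or.inr ⟨hx, h1, hle.2⟩,
            Or.inr ⟨rfl, hb3, hb4⟩, hR⟩
        · push Not at h1
          by_cases h2 : (F a).y1 ≤ (F b).y2
          · exact Or.inr ⟨((F b).x2, (F a).y1), Or.inr ⟨hx, le_rfl, (F a).hy⟩,
              Or.inr ⟨rfl, hb3.trans h1.le, h2⟩, not_IPF_up F hR le_rfl h1.le⟩
          · push Not at h2
            rcases hqa with h | h
            · exact absurd h.2.1 (not_le.2 h1)
            · refine Or.inl (Or.inl ⟨lt_of_le_of_lt hlx h.1, ?_⟩)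
              rw [hl1]
              exact lt_of_lt_of_le h2 (F a).hy
      · rcases hle.2.eq_or_lt with h1 | h1
        · rcases hqa with h | h
          · exact Or.inr ⟨((F b).x2, qy), Or.inl ⟨⟨le_trans h.1.1 hb2, hx.le⟩, h1⟩,
              Or.inr ⟨rfl, hb3, hb4⟩, hR⟩
          · exact absurd h1 (ne_of_lt h.2)
        · refine Or.inl (Or.inr ⟨?_, lt_of_le_of_lt hry h1⟩)
          rw [hr1]
          exact hx
  · have htop : ∀ i, ∀ q ∈ (F i).topFacet, q ∈ (F i).toSet := by
      rintro i ⟨x, y⟩ ⟨h1, h2⟩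
      simp only [Set.mem_singleton_iff] at h2
      subst h2
      exact ⟨h1, (F i).hy, le_rfl⟩
    have hright : ∀ i, ∀ q ∈ (F i).rightFacet, q ∈ (F i).toSet := by
      rintro i ⟨x, y⟩ ⟨h1, h2⟩
      simp only [Set.mem_singleton_iff] at h1
      subst h1
      exact ⟨⟨(F i).hx, le_rfl⟩, h2⟩
    have htr : (F a).tr ∈ (F a).toSet := ⟨⟨(F a).hx, le_rfl⟩, (F a).hy, le_rfl⟩
    rintro ((h | h) | ⟨q, hqa, hqb, hq⟩)
    · refine ⟨hab, l b, htop b _ (hl b).1, fun hd => ?_, (hl b).2.1, Or.inr h⟩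
      have h1 : (l b).2 = (F b).y2 := (hl b).1.2
      have h2 : (F a).y2 < (F b).y2 := (hd _ htr).2
      have h3 : (l b).2 < (F a).y2 := h.2
      linarith
    · refine ⟨hab, r b, hright b _ (hr b).1, fun hd => ?_, (hr b).2.1, Or.inr h⟩
      have h1 : (r b).1 = (F b).x2 := (hr b).1.1
      have h2 : (F a).x2 < (F b).x2 := (hd _ htr).1
      have h3 : (r b).1 < (F a).x2 := h.1
      linarith
    · have hqa' : q ∈ (F a).toSet := hqa.elim (htop a q) (hright a q)
      refine ⟨hab, q, hqb.elim (htop b q) (hright b q), fun hd => ?_, hq, Or.inl hqa'⟩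
      rcases hqb with h | h
      · have h1 : q.2 = (F b).y2 := h.2
        exact (ne_of_lt (hd q hqa').2) h1
      · have h1 : q.1 = (F b).x2 := h.1
        exact (ne_of_lt (hd q hqa').1) h1
end

section
/- Let G be a finite family of axis-aligned rectangles with layers G₁, …, G_k, let P ∼ G, and let F = G ⊙ A for some subset A ⊆ G of retrieved regions. Say a region R ∈ F is dominated in F if for every realization of F, the point of R is dominated by the point of some other region of F. Fix an index i and suppose that every region of G₁ ∪ … ∪ G_{i−1} is, in F, either a point region or dominated in F. Then every region R_a ∈ Gᵢ that is not retrieved and not dominated in F lies on OPF(F); equivalently, its top-right corner is not dominated by the top-right corner of any other region of F. -/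
theorem Rect.tr_mem (R : Rect) : R.tr ∈ R.toSet :=
  ⟨⟨R.hx, le_rfl⟩, ⟨R.hy, le_rfl⟩⟩

theorem Rect.le_tr {R : Rect} {q : ℝ × ℝ} (h : q ∈ R.toSet) :
    q.1 ≤ R.tr.1 ∧ q.2 ≤ R.tr.2 :=
  ⟨h.1.2, h.2.2⟩

theorem remaining_or_layer {n : ℕ} (G : Fin n → Rect) (b : Fin n) (i : ℕ) :
    b ∈ remaining G i ∨ ∃ j < i, b ∈ layer G j := by
  induction i with
  | zero => exact Or.inl trivial
  | succ i ih =>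
    rcases ih with h | ⟨j, hj, h⟩
    · by_cases hb : b ∈ layer G i
      · exact Or.inr ⟨i, Nat.lt_succ_self i, hb⟩
      · exact Or.inl ⟨h, hb⟩
    · exact Or.inr ⟨j, Nat.lt_succ_of_lt hj, h⟩

theorem retrieve_tr_mem {n : ℕ} (G : Fin n → Rect) (P : Fin n → ℝ × ℝ) (A : Set (Fin n))
    (hP : IsRealization G P) (b : Fin n) : (retrieve G P A b).tr ∈ (G b).toSet := by
  by_cases hb : b ∈ A
  · have : (retrieve G P A b).tr = P b := by simp [retrieve, hb, pointRect, Rect.tr]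
    rw [this]
    exact hP b
  · have : retrieve G P A b = G b := by simp [retrieve, hb]
    rw [this]
    exact Rect.tr_mem _

/-- If every region of the layers before `i` is (in `F = G ⊙ A`) a point
region or dominated in `F`, then every non-retrieved, non-dominated region of layer `i`
lies on `OPF F`; equivalently, its top-right corner is not dominated by the top-right
corner of any other region of `F`. -/
theorem stmt11 {n : ℕ} (G : Fin n → Rect) (P : Fin n → ℝ × ℝ) (A : Set (Fin n))
    (hP : IsRealization G P) (i : ℕ)
    (hprev : ∀ j < i, ∀ b ∈ layer G j,
      (retrieve G P A b).isPoint ∨ dominatedIn (retrieve G P A) b)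
    (a : Fin n) (ha : a ∈ layer G i) (haA : a ∉ A)
    (hnd : ¬ dominatedIn (retrieve G P A) a) :
    a ∈ OPF (retrieve G P A) ∧
      ∀ b, b ≠ a → ¬ dom ((retrieve G P A) b).tr ((retrieve G P A) a).tr := by
  have haF : retrieve G P A a = G a := by simp [retrieve, haA]
  have key : ∀ b, b ≠ a → ¬ dom ((retrieve G P A) b).tr ((retrieve G P A) a).tr := by
    by_contra hcon
    push Not at hcon
    obtain ⟨b₀, -, hb₀⟩ := hcon
    obtain ⟨b, hb, hmax⟩ := Set.exists_max_image
      {b | dom ((retrieve G P A) b).tr ((retrieve G P A) a).tr}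
      (fun b => (retrieve G P A b).tr.1) (Set.toFinite _) ⟨b₀, hb₀⟩
    have hb' : dom (retrieve G P A b).tr (retrieve G P A a).tr := hb
    have hba : b ≠ a := by
      rintro rfl
      exact lt_irrefl _ hb'.1
    rcases remaining_or_layer G b i with hr | ⟨j, hj, hl⟩
    · obtain ⟨-, p, hp, hpd⟩ := ha
      have h2 := Rect.le_tr hp
      rw [haF] at hb'
      exact hpd b hr hba _ (retrieve_tr_mem G P A hP b)
        ⟨lt_of_le_of_lt h2.1 hb'.1, lt_of_le_of_lt h2.2 hb'.2⟩
    · rcases hprev j hj b hl with hpt | hd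
      · apply hnd
        intro Q hQ
        refine ⟨b, hba, ?_⟩
        have h2 := Rect.le_tr (hQ a)
        have h3 := hQ b
        have h4 : (retrieve G P A b).tr.1 ≤ (Q b).1 := le_trans (le_of_eq hpt.1.symm) h3.1.1
        have h5 : (retrieve G P A b).tr.2 ≤ (Q b).2 := le_trans (le_of_eq hpt.2.symm) h3.2.1
        exact ⟨lt_of_le_of_lt h2.1 (lt_of_lt_of_le hb'.1 h4),
          lt_of_le_of_lt h2.2 (lt_of_lt_of_le hb'.2 h5)⟩
      · obtain ⟨c, -, hcd⟩ := hd (fun k => (retrieve G P A k).tr) (fun k => Rect.tr_mem _)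
        have := hmax c ⟨hb'.1.trans hcd.1, hb'.2.trans hcd.2⟩
        exact absurd hcd.1 (not_lt.mpr this)
  refine ⟨⟨_, Rect.tr_mem _, fun b hb q hq hdq => key b hb ?_⟩, key⟩
  have h2 := Rect.le_tr hq
  exact ⟨lt_of_lt_of_le hdq.1 h2.1, lt_of_lt_of_le hdq.2 h2.2⟩
end

section
/- For all real numbers x, y ≥ 0, it holds that x·log(2+x) + y·log(2+y) ≥ (1/4)·(x+y)·log(2+x+y), where log denotes the natural logarithm (the inequality is independent of the base of the logarithm). -/
/-- For all reals `x, y ≥ 0`,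
`x·log(2+x) + y·log(2+y) ≥ (1/4)·(x+y)·log(2+x+y)`. -/
theorem stmt13 (x y : ℝ) (hx : 0 ≤ x) (hy : 0 ≤ y) :
    (1 / 4) * (x + y) * Real.log (2 + x + y) ≤
      x * Real.log (2 + x) + y * Real.log (2 + y) := by
  have key : ∀ a b : ℝ, 0 ≤ b → b ≤ a →
      (1 / 4) * (a + b) * Real.log (2 + a + b) ≤
        a * Real.log (2 + a) + b * Real.log (2 + b) := by
    intro a b hb hab
    have h1 : Real.log (2 + a + b) ≤ 2 * Real.log (2 + a) := by
      have h : Real.log (2 + a + b) ≤ Real.log ((2 + a) ^ 2) :=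
        Real.log_le_log (by linarith) (by nlinarith [sq_nonneg a])
      rw [Real.log_pow] at h
      exact_mod_cast h
    have h2 : 0 ≤ Real.log (2 + a) := Real.log_nonneg (by linarith)
    have h3 : 0 ≤ Real.log (2 + b) := Real.log_nonneg (by linarith)
    have h4 : 0 ≤ b * Real.log (2 + b) := mul_nonneg hb h3
    have h5 : (1 / 4) * (a + b) * Real.log (2 + a + b) ≤
        (1 / 4) * (a + b) * (2 * Real.log (2 + a)) :=
      mul_le_mul_of_nonneg_left h1 (by linarith)
    have h6 : 0 ≤ (a - b) * Real.log (2 + a) := mul_nonneg (by linarith) h2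
    linarith
  rcases le_total y x with h | h
  · exact key x y hy h
  · have := key y x hx h
    rw [show 2 + x + y = 2 + y + x by ring, add_comm x y]
    linarith
end

section
/- Let k ≥ 1 and m ≥ 1 be given, and let [a₁,b₁], …, [a_k,b_k] be closed real intervals with [aᵢ,bᵢ] ⊆ [0,m] and bᵢ − aᵢ ≥ 1 for all i. Let Z be the set of realizable permutations of {1,…,k}. Then |Z| ≥ k! · (∏_{i=1}^{k} (bᵢ − aᵢ)) / m^k. -/
open MeasureTheory in
lemma cone_measurable (k : ℕ) (σ : Equiv.Perm (Fin k)) (m : ℝ) :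
    MeasurableSet {z : Fin k → ℝ | (∀ i, z i ∈ Set.Icc 0 m) ∧ StrictMono (fun i => z (σ i))} := by
  have : {z : Fin k → ℝ | (∀ i, z i ∈ Set.Icc 0 m) ∧ StrictMono (fun i => z (σ i))} =
      (⋂ i, {z : Fin k → ℝ | z i ∈ Set.Icc 0 m}) ∩
        ⋂ i, ⋂ j, ⋂ (_ : i < j), {z : Fin k → ℝ | z (σ i) < z (σ j)} := by
    ext z
    simp [StrictMono]
  rw [this]
  refine MeasurableSet.inter (MeasurableSet.iInter fun i => ?_)
    (MeasurableSet.iInter fun i => MeasurableSet.iInter fun j => MeasurableSet.iInter fun _ => ?_)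
  · exact (measurable_pi_apply i) measurableSet_Icc
  · exact measurableSet_lt (measurable_pi_apply _) (measurable_pi_apply _)

open MeasureTheory in
lemma cone_volume (k : ℕ) (σ : Equiv.Perm (Fin k)) (m : ℝ) :
    volume {z : Fin k → ℝ | (∀ i, z i ∈ Set.Icc 0 m) ∧ StrictMono (fun i => z (σ i))} =
    volume {z : Fin k → ℝ | (∀ i, z i ∈ Set.Icc 0 m) ∧
      StrictMono (fun i => z ((1 : Equiv.Perm (Fin k)) i))} := by
  have hT := volume_measurePreserving_piCongrLeft (fun _ : Fin k => ℝ) σ.symm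
  rw [← hT.measure_preimage (cone_measurable k 1 m).nullMeasurableSet]
  congr 1
  have key : ∀ (z : Fin k → ℝ) j,
      (MeasurableEquiv.piCongrLeft (fun _ : Fin k => ℝ) σ.symm) z j = z (σ j) := by
    intro z j
    have := MeasurableEquiv.piCongrLeft_apply_apply (β := fun _ : Fin k => ℝ) σ.symm z (σ j)
    simpa using this
  ext z
  simp only [Set.mem_setOf_eq, Set.mem_preimage, key, Equiv.Perm.one_apply]
  refine and_congr ⟨fun h i => h _, fun h i => ?_⟩ Iff.rfl
  simpa using h (σ.symm i)

open MeasureTheory in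
lemma diag_null (k : ℕ) : volume {z : Fin k → ℝ | ¬ Function.Injective z} = 0 := by
  have : {z : Fin k → ℝ | ¬ Function.Injective z} ⊆
      ⋃ i, ⋃ j, ⋃ (_ : i ≠ j), {z : Fin k → ℝ | z i = z j} := by
    intro z hz
    simp only [Set.mem_setOf_eq, Function.Injective] at hz
    push Not at hz
    obtain ⟨i, j, h, hne⟩ := hz
    simp only [Set.mem_iUnion]
    exact ⟨i, j, hne, h⟩
  refine measure_mono_null this ?_
  refine measure_iUnion_null fun i => measure_iUnion_null fun j => measure_iUnion_null fun hij => ?_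
  let L : (Fin k → ℝ) →ₗ[ℝ] ℝ :=
    (LinearMap.proj i : (Fin k → ℝ) →ₗ[ℝ] ℝ) - (LinearMap.proj j : (Fin k → ℝ) →ₗ[ℝ] ℝ)
  have hL : {z : Fin k → ℝ | z i = z j} = (LinearMap.ker L : Set (Fin k → ℝ)) := by
    ext z
    simp [L, sub_eq_zero]
  rw [hL]
  apply Measure.addHaar_submodule
  intro htop
  have : Pi.single i (1 : ℝ) ∈ LinearMap.ker L := by rw [htop]; trivial
  simp [L, hij.symm] at this

/-- The number of realizable permutations of `k` intervals of length at
least `1` contained in `[0, m]` is at least `k! · ∏ᵢ (bᵢ - aᵢ) / m^k`. -/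
theorem stmt14 (k : ℕ) (hk : 1 ≤ k) (m : ℝ) (hm : 1 ≤ m)
    (a b : Fin k → ℝ)
    (hsub : ∀ i, Set.Icc (a i) (b i) ⊆ Set.Icc (0 : ℝ) m)
    (hlen : ∀ i, 1 ≤ b i - a i) :
    (Nat.factorial k : ℝ) * (∏ i, (b i - a i)) / m ^ k ≤
      (({σ : Equiv.Perm (Fin k) | realizable k a b σ}.ncard : ℕ) : ℝ) := by
  classical
  let C : Equiv.Perm (Fin k) → Set (Fin k → ℝ) := fun σ =>
    {z : Fin k → ℝ | (∀ i, z i ∈ Set.Icc 0 m) ∧ StrictMono (fun i => z (σ i))}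
  have hCm : ∀ σ, MeasurableSet (C σ) := fun σ => cone_measurable k σ m
  have hCv : ∀ σ, MeasureTheory.volume (C σ) = MeasureTheory.volume (C 1) :=
    fun σ => cone_volume k σ m
  have hm0 : 0 ≤ m := by linarith
  have hdis : Pairwise (Function.onFun Disjoint C) := by
    intro σ τ hne
    rw [Function.onFun, Set.disjoint_left]
    rintro z ⟨_, h1⟩ ⟨_, h2⟩
    apply hne
    have hinj : Function.Injective z := by
      intro i j hij
      have : σ.symm i = σ.symm j := h1.injective (by simpa using hij)
      exact σ.symm.injective this
    have e : (fun i => z (σ i)) = fun i => z (τ i) := by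
      apply (StrictMono.range_inj h1 h2).1
      have r : ∀ ρ : Equiv.Perm (Fin k), Set.range (fun i => z (ρ i)) = Set.range z :=
        fun ρ => ρ.surjective.range_comp z
      rw [r, r]
    ext i
    exact congrArg Fin.val (hinj (congrFun e i))
  have hcube : MeasureTheory.volume (Set.Icc (fun _ : Fin k => (0 : ℝ)) (fun _ => m)) =
      ENNReal.ofReal (m ^ k) := by
    rw [Real.volume_Icc_pi, ← ENNReal.ofReal_prod_of_nonneg (by intros; linarith)]
    simp
  have hbox : MeasureTheory.volume (Set.Icc a b) = ENNReal.ofReal (∏ i, (b i - a i)) := by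
    rw [Real.volume_Icc_pi, ← ENNReal.ofReal_prod_of_nonneg (by intro i _; linarith [hlen i])]
  have h1 : (Nat.factorial k : ENNReal) * MeasureTheory.volume (C 1) ≤ ENNReal.ofReal (m ^ k) := by
    rw [← hcube]
    calc (Nat.factorial k : ENNReal) * MeasureTheory.volume (C 1)
        = ∑ σ, MeasureTheory.volume (C σ) := by
          simp [hCv, Fintype.card_perm]
      _ = MeasureTheory.volume (⋃ σ, C σ) := by
          rw [MeasureTheory.measure_iUnion hdis hCm, tsum_fintype]
      _ ≤ _ := by
          apply MeasureTheory.measure_mono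
          apply Set.iUnion_subset
          rintro σ z ⟨hz, _⟩
          exact ⟨fun i => (hz i).1, fun i => (hz i).2⟩
  let Z : Finset (Equiv.Perm (Fin k)) := Finset.univ.filter (realizable k a b)
  have hZ : {σ : Equiv.Perm (Fin k) | realizable k a b σ}.ncard = Z.card := by
    rw [← Set.ncard_coe_finset]
    congr 1
    ext σ
    simp [Z]
  have h2 : ENNReal.ofReal (∏ i, (b i - a i)) ≤ (Z.card : ENNReal) * MeasureTheory.volume (C 1) := by
    rw [← hbox]
    calc MeasureTheory.volume (Set.Icc a b)
        ≤ MeasureTheory.volume ((⋃ σ ∈ Z, C σ) ∪ {z : Fin k → ℝ | ¬ Function.Injective z}) := by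
          apply MeasureTheory.measure_mono
          intro z hz
          by_cases hinj : Function.Injective z
          · left
            have hs : StrictMono (fun i => z (Tuple.sort z i)) :=
              (Tuple.monotone_sort z).strictMono_of_injective
                (hinj.comp (Tuple.sort z).injective)
            have hmem : ∀ i, z i ∈ Set.Icc (a i) (b i) := fun i => ⟨hz.1 i, hz.2 i⟩
            simp only [Set.mem_iUnion]
            refine ⟨Tuple.sort z, ?_, fun i => hsub i (hmem i), hs⟩
            simp only [Z, Finset.mem_filter, Finset.mem_univ, true_and]
            exact ⟨z, hinj, hmem, hs⟩
          · right
            exact hinj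
      _ ≤ MeasureTheory.volume (⋃ σ ∈ Z, C σ) + 0 := by
          rw [← diag_null k]
          exact MeasureTheory.measure_union_le _ _
      _ ≤ ∑ σ ∈ Z, MeasureTheory.volume (C σ) := by
          rw [add_zero]
          exact MeasureTheory.measure_biUnion_finset_le _ _
      _ = _ := by simp [hCv]
  rw [hZ]
  have hmk : 0 < m ^ k := by positivity
  rw [div_le_iff₀ hmk]
  have h3 : ENNReal.ofReal ((Nat.factorial k : ℝ) * ∏ i, (b i - a i)) ≤
      ENNReal.ofReal ((Z.card : ℝ) * m ^ k) := by
    rw [ENNReal.ofReal_mul (by positivity), ENNReal.ofReal_mul (by positivity),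
      ENNReal.ofReal_natCast, ENNReal.ofReal_natCast]
    calc _ ≤ (Nat.factorial k : ENNReal) * ((Z.card : ENNReal) * MeasureTheory.volume (C 1)) := by
          gcongr
      _ = (Z.card : ENNReal) * ((Nat.factorial k : ENNReal) * MeasureTheory.volume (C 1)) := by ring
      _ ≤ _ := by gcongr
  exact (ENNReal.ofReal_le_ofReal_iff (by positivity)).1 h3
end

section
/- Let k ≥ 1 and m ≥ 1 be given, and let [a₁,b₁], …, [a_k,b_k] be closed real intervals with [aᵢ,bᵢ] ⊆ [0,m] and bᵢ − aᵢ ≥ 1 for all i. Let Z be the set of realizable permutations of {1,…,k}. Then ∑_{i=1}^{k} log₂(bᵢ − aᵢ) ≤ log₂|Z| + k·log₂(e·m/k). -/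
/-- The part of the cube `[0,m]^k` sorted by `σ`. -/
def sortedCube (k : ℕ) (m : ℝ) (σ : Equiv.Perm (Fin k)) : Set (Fin k → ℝ) :=
  {z | (∀ i, z i ∈ Set.Icc (0:ℝ) m) ∧ StrictMono (fun i => z (σ i))}

theorem sortedCube_meas (k : ℕ) (m : ℝ) (σ : Equiv.Perm (Fin k)) :
    MeasurableSet (sortedCube k m σ) := by
  have : sortedCube k m σ = (⋂ i, {z : Fin k → ℝ | z i ∈ Set.Icc (0:ℝ) m}) ∩
      ⋂ i, ⋂ j, ⋂ (_ : i < j), {z : Fin k → ℝ | z (σ i) < z (σ j)} := by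
    ext z
    simp [sortedCube, StrictMono]
  rw [this]
  refine MeasurableSet.inter (MeasurableSet.iInter fun i => ?_)
    (MeasurableSet.iInter fun i => MeasurableSet.iInter fun j => MeasurableSet.iInter fun _ => ?_)
  · exact measurable_pi_apply i measurableSet_Icc
  · exact measurableSet_lt (measurable_pi_apply _) (measurable_pi_apply _)

theorem sortedCube_vol (k : ℕ) (m : ℝ) (σ : Equiv.Perm (Fin k)) :
    MeasureTheory.volume (sortedCube k m σ) = MeasureTheory.volume (sortedCube k m 1) := by
  have h := MeasureTheory.volume_measurePreserving_piCongrLeft (fun _ : Fin k => ℝ) σ.symm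
  rw [← h.measure_preimage (sortedCube_meas k m 1).nullMeasurableSet]
  congr 1
  ext z
  have key : ∀ i, (MeasurableEquiv.piCongrLeft (fun _ : Fin k => ℝ) σ.symm) z i = z (σ i) := by
    intro i
    have := Equiv.piCongrLeft_apply_apply (fun _ : Fin k => ℝ) σ.symm z (σ i)
    simpa [MeasurableEquiv.piCongrLeft] using this
  simp only [sortedCube, Set.mem_preimage, Set.mem_ofPred_eq, key, Equiv.Perm.one_apply]
  refine and_congr ⟨fun h i => h _, fun h i => ?_⟩ Iff.rfl
  simpa using h (σ.symm i)

theorem sortedCube_disj (k : ℕ) (m : ℝ) :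
    Pairwise (Function.onFun Disjoint (sortedCube k m)) := by
  intro σ τ hne
  rw [Function.onFun, Set.disjoint_left]
  rintro z ⟨_, h1⟩ ⟨_, h2⟩
  apply hne
  have hinj : Function.Injective z := by
    have := h1.injective.comp σ.symm.injective
    have h3 : (fun i => z (σ i)) ∘ σ.symm = z := by ext; simp
    rwa [h3] at this
  have e : (fun i => z (σ i)) = (fun i => z (τ i)) := by
    apply (StrictMono.range_inj h1 h2).1
    have r1 : Set.range (fun i => z (σ i)) = Set.range z := σ.surjective.range_comp z
    have r2 : Set.range (fun i => z (τ i)) = Set.range z := τ.surjective.range_comp z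
    rw [r1, r2]
  ext i
  exact congrArg _ (hinj (congrFun e i))

theorem sortedCube_bound (k : ℕ) (m : ℝ) :
    (k.factorial : ENNReal) * MeasureTheory.volume (sortedCube k m 1) ≤ ENNReal.ofReal m ^ k := by
  have h1 : MeasureTheory.volume (⋃ σ, sortedCube k m σ) =
      (k.factorial : ENNReal) * MeasureTheory.volume (sortedCube k m 1) := by
    rw [MeasureTheory.measure_iUnion (sortedCube_disj k m) (sortedCube_meas k m), tsum_fintype]
    simp [sortedCube_vol k m, Fintype.card_perm]
  rw [← h1]
  calc _ ≤ MeasureTheory.volume (Set.univ.pi fun _ : Fin k => Set.Icc (0:ℝ) m) := by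
        apply MeasureTheory.measure_mono
        intro z hz
        obtain ⟨σ, hσ⟩ := Set.mem_iUnion.1 hz
        exact fun i _ => hσ.1 i
    _ = _ := by rw [MeasureTheory.volume_pi_pi]; simp

theorem nonInj_null (k : ℕ) :
    MeasureTheory.volume {z : Fin k → ℝ | ¬ Function.Injective z} = 0 := by
  have : {z : Fin k → ℝ | ¬ Function.Injective z} ⊆
      ⋃ i, ⋃ j, ⋃ (_ : i ≠ j), {z : Fin k → ℝ | z i = z j} := by
    intro z hz
    simp only [Set.mem_ofPred_eq, Function.Injective] at hz
    push Not at hz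
    obtain ⟨i, j, h, hne⟩ := hz
    simp only [Set.mem_iUnion]
    exact ⟨i, j, hne, h⟩
  refine MeasureTheory.measure_mono_null this ?_
  simp only [MeasureTheory.measure_iUnion_null_iff]
  intro i j hne
  let L : (Fin k → ℝ) →ₗ[ℝ] ℝ := (LinearMap.proj i : (Fin k → ℝ) →ₗ[ℝ] ℝ) - LinearMap.proj j
  have hL : {z : Fin k → ℝ | z i = z j} = (LinearMap.ker L : Set (Fin k → ℝ)) := by
    ext z
    simp [L, sub_eq_zero]
  rw [hL]
  apply MeasureTheory.Measure.addHaar_submodule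
  intro htop
  have h1 : Pi.single i (1:ℝ) ∈ LinearMap.ker L := by rw [htop]; trivial
  simp [L, hne.symm] at h1

/-- `∑ᵢ log₂(bᵢ - aᵢ) ≤ log₂ |Z| + k·log₂(e·m/k)` for `k` intervals of
length at least `1` contained in `[0, m]`, where `Z` is the set of realizable
permutations. -/
theorem stmt15 (k : ℕ) (hk : 1 ≤ k) (m : ℝ) (hm : 1 ≤ m)
    (a b : Fin k → ℝ)
    (hsub : ∀ i, Set.Icc (a i) (b i) ⊆ Set.Icc (0 : ℝ) m)
    (hlen : ∀ i, 1 ≤ b i - a i) :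
    ∑ i, Real.logb 2 (b i - a i) ≤
      Real.logb 2 ({σ : Equiv.Perm (Fin k) | realizable k a b σ}.ncard) +
        k * Real.logb 2 (Real.exp 1 * m / k) := by

  classical
  set Z : Set (Equiv.Perm (Fin k)) := {σ | realizable k a b σ} with hZ
  have hkpos : (0:ℝ) < k := by exact_mod_cast hk
  have hm0 : (0:ℝ) < m := by linarith
  set V := MeasureTheory.volume (sortedCube k m 1) with hV
  have hbd := sortedCube_bound k m
  -- the box is covered by the realizable sorted cubes and a null set
  have hcover : (Set.univ.pi fun i => Set.Icc (a i) (b i)) ⊆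
      (⋃ σ ∈ Z.toFinset, sortedCube k m σ) ∪ {z | ¬ Function.Injective z} := by
    intro z hz
    by_cases hi : Function.Injective z
    · left
      have hs : StrictMono (fun i => z (Tuple.sort z i)) :=
        (Tuple.monotone_sort z).strictMono_of_injective (hi.comp (Tuple.sort z).injective)
      simp only [Set.mem_iUnion]
      refine ⟨Tuple.sort z, ?_, fun i => hsub i (hz i trivial), hs⟩
      rw [Set.mem_toFinset]
      exact ⟨z, hi, fun i => hz i trivial, hs⟩
    · right; exact hi
  have hle : ENNReal.ofReal (∏ i, (b i - a i)) ≤ (Z.ncard : ENNReal) * V := by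
    calc ENNReal.ofReal (∏ i, (b i - a i))
        = MeasureTheory.volume (Set.univ.pi fun i => Set.Icc (a i) (b i)) := by
          rw [MeasureTheory.volume_pi_pi, ENNReal.ofReal_prod_of_nonneg]
          · simp
          · intro i _; linarith [hlen i]
      _ ≤ _ := MeasureTheory.measure_mono hcover
      _ ≤ _ := MeasureTheory.measure_union_le _ _
      _ ≤ ∑ σ ∈ Z.toFinset, MeasureTheory.volume (sortedCube k m σ) := by
          rw [nonInj_null, add_zero]
          exact MeasureTheory.measure_biUnion_finset_le _ _
      _ = _ := by
          simp [sortedCube_vol k m, Set.ncard_eq_toFinset_card', hV]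
  have hle2 : ENNReal.ofReal ((k.factorial : ℝ) * ∏ i, (b i - a i)) ≤
      ENNReal.ofReal ((Z.ncard : ℝ) * m ^ k) := by
    rw [ENNReal.ofReal_mul (by positivity), ENNReal.ofReal_mul (by positivity),
      ENNReal.ofReal_natCast, ENNReal.ofReal_natCast, ENNReal.ofReal_pow hm0.le]
    calc _ ≤ (k.factorial : ENNReal) * ((Z.ncard : ENNReal) * V) := by gcongr
      _ = (Z.ncard : ENNReal) * ((k.factorial : ENNReal) * V) := by ring
      _ ≤ _ := by gcongr
  have hreal : (k.factorial : ℝ) * ∏ i, (b i - a i) ≤ (Z.ncard : ℝ) * m ^ k :=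
    (ENNReal.ofReal_le_ofReal_iff (by positivity)).1 hle2
  have hP : 0 < ∏ i, (b i - a i) := Finset.prod_pos fun i _ => by linarith [hlen i]
  have hf : (0:ℝ) < k.factorial := by exact_mod_cast k.factorial_pos
  have hN : (0:ℝ) < Z.ncard := by
    have : 0 < (Z.ncard : ℝ) * m ^ k := lt_of_lt_of_le (by positivity) hreal
    exact pos_of_mul_pos_left this (by positivity)
  have hst : (k:ℝ) ^ k / k.factorial ≤ Real.exp k := Real.pow_div_factorial_le_exp k hkpos.le k
  rw [div_le_iff₀ hf] at hst
  have hfin : ∏ i, (b i - a i) ≤ Z.ncard * (Real.exp 1 * m / k) ^ k := by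
    rw [div_pow, mul_pow, ← Real.exp_nat_mul, mul_one, ← mul_div_assoc, le_div_iff₀ (by positivity)]
    calc (∏ i, (b i - a i)) * (k:ℝ) ^ k ≤ (∏ i, (b i - a i)) * (Real.exp k * k.factorial) := by
          gcongr
      _ = Real.exp k * ((k.factorial : ℝ) * ∏ i, (b i - a i)) := by ring
      _ ≤ Real.exp k * ((Z.ncard : ℝ) * m ^ k) := by gcongr
      _ = _ := by ring
  have hc : (0:ℝ) < Real.exp 1 * m / k := by positivity
  rw [← Real.logb_prod _ _ (fun i _ => by have := hlen i; intro h; linarith : ∀ i ∈ Finset.univ, b i - a i ≠ 0),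
    ← Real.logb_pow, ← Real.logb_mul hN.ne' (by positivity)]
  exact Real.logb_le_logb_of_le (by norm_num) hP hfin
end

section
/- Let F = (R₁,…,Rₙ) be a finite family of axis-aligned rectangles. Let Q be a finite set of points, all with pairwise distinct x-coordinates and pairwise distinct y-coordinates, such that no point of Q dominates another point of Q and no point of Q lies in IPF(F). Suppose each region of F is assigned at most one point of Q lying in the interior of that region, and for q ∈ Q let F_q denote the set of regions assigned to q. For a realization P ∼ F, define the relation ≺_P on {1,…,n} by a ≺_P b iff p_a and p_b both lie on the Pareto front of P and p_a lies strictly to the left of or strictly above p_b. Then the number of distinct relations ≺_P over all realizations P ∼ F is at least ∏_{q ∈ Q} |F_q|!. -/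
open Filter Topology in
theorem stmt18_eps {n : ℕ} (F : Fin n → Rect) (Q : Finset (ℝ × ℝ))
    (assign : Fin n → Option (ℝ × ℝ))
    (hassign : ∀ i q, assign i = some q → q ∈ Q ∧ q ∈ interior (F i).toSet) :
    ∃ ε : ℝ, 0 < ε ∧
      (∀ i, ∀ q ∈ Q, assign i = some q → q.1 + 2 * ε < (F i).x2 ∧ q.2 + 2 * ε < (F i).y2) ∧
      (∀ q ∈ Q, ∀ q' ∈ Q, (q.1 < q'.1 → q.1 + 2 * ε < q'.1) ∧
        (q.2 < q'.2 → q.2 + 2 * ε < q'.2)) := by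
  have key : ∀ a b : ℝ, a < b → ∀ᶠ ε in 𝓝[>] (0 : ℝ), a + 2 * ε < b := by
    intro a b hab
    have : Tendsto (fun ε : ℝ => a + 2 * ε) (𝓝[>] 0) (𝓝 a) := by
      have h : Continuous (fun ε : ℝ => a + 2 * ε) := by fun_prop
      have := h.tendsto 0
      simp only [mul_zero, add_zero] at this
      exact this.mono_left nhdsWithin_le_nhds
    exact this.eventually_lt_const hab
  have key' : ∀ a b : ℝ, ∀ᶠ ε in 𝓝[>] (0 : ℝ), a < b → a + 2 * ε < b := by
    intro a b
    by_cases hab : a < b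
    · filter_upwards [key a b hab] with ε h _ using h
    · exact Eventually.of_forall fun _ h => absurd h hab
  have e1 : ∀ᶠ ε in 𝓝[>] (0 : ℝ), 0 < ε := eventually_mem_nhdsWithin
  have e2 : ∀ᶠ ε in 𝓝[>] (0 : ℝ), ∀ i, ∀ q ∈ Q, assign i = some q →
      q.1 + 2 * ε < (F i).x2 ∧ q.2 + 2 * ε < (F i).y2 := by
    rw [eventually_all]
    intro i
    rw [eventually_all_finset]
    intro q hq
    by_cases h : assign i = some q
    · have hi := (hassign i q h).2
      rw [Rect.toSet, interior_prod_eq, interior_Icc, interior_Icc] at hi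
      obtain ⟨h1, h2⟩ := hi
      filter_upwards [key _ _ h1.2, key _ _ h2.2] with ε a b _ using ⟨a, b⟩
    · exact Eventually.of_forall fun _ h' => absurd h' h
  have e3 : ∀ᶠ ε in 𝓝[>] (0 : ℝ), ∀ q ∈ Q, ∀ q' ∈ Q, (q.1 < q'.1 → q.1 + 2 * ε < q'.1) ∧
        (q.2 < q'.2 → q.2 + 2 * ε < q'.2) := by
    rw [eventually_all_finset]
    intro q hq
    rw [eventually_all_finset]
    intro q' hq'
    exact (key' _ _).and (key' _ _)
  exact (e1.and (e2.and e3)).exists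

theorem stmt18_core {n : ℕ} (F : Fin n → Rect) (Q : Finset (ℝ × ℝ))
    (hcoord : ∀ q ∈ Q, ∀ q' ∈ Q, q ≠ q' → q.1 ≠ q'.1 ∧ q.2 ≠ q'.2)
    (hnd : ∀ q ∈ Q, ∀ q' ∈ Q, q ≠ q' → ¬ dom q q')
    (hIPF : ∀ q ∈ Q, q ∉ IPF F)
    (assign : Fin n → Option (ℝ × ℝ))
    (hassign : ∀ i q, assign i = some q → q ∈ Q ∧ q ∈ interior (F i).toSet)
    (s : Fin n → ℝ) (hs : ∀ i, 0 ≤ s i ∧ s i ≤ 1) :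
    ∃ P : Fin n → ℝ × ℝ, IsRealization F P ∧
      ∀ q i j, assign i = some q → assign j = some q → (precRel P i j ↔ s i < s j) := by
  obtain ⟨ε, hε, hF, hQ⟩ := stmt18_eps F Q assign hassign
  set P : Fin n → ℝ × ℝ := fun i => match assign i with
    | some q => (q.1 + ε * (1 + s i), q.2 + ε * (2 - s i))
    | none => (F i).bl with hP
  have Psome : ∀ i q, assign i = some q →
      P i = (q.1 + ε * (1 + s i), q.2 + ε * (2 - s i)) := by
    intro i q h; simp [hP, h]
  have Pnone : ∀ i, assign i = none → P i = (F i).bl := by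
    intro i h; simp [hP, h]
  have b1 : ∀ i, 0 < ε * (1 + s i) ∧ ε * (1 + s i) ≤ 2 * ε := by
    intro i
    constructor
    · have := hs i; apply mul_pos hε; linarith
    · nlinarith [hs i]
  have b2 : ∀ i, 0 < ε * (2 - s i) ∧ ε * (2 - s i) ≤ 2 * ε := by
    intro i
    constructor
    · have := hs i; apply mul_pos hε; linarith
    · nlinarith [hs i]
  have hbl : ∀ i, ∀ q ∈ Q, ¬ dom (F i).bl q := by
    intro i q hq hd
    apply hIPF q hq
    intro P' hP'
    refine ⟨i, ?_⟩
    obtain ⟨h1, h2⟩ := hP' i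
    exact ⟨lt_of_lt_of_le hd.1 h1.1, lt_of_lt_of_le hd.2 h2.1⟩
  have front : ∀ i q, assign i = some q → ∀ c, ¬ dom (P c) (P i) := by
    intro i q hi c hd
    have hq := (hassign i q hi).1
    rw [Psome i q hi] at hd
    rcases hc : assign c with _ | q'
    · rw [Pnone c hc] at hd
      refine hbl c q hq ⟨?_, ?_⟩
      · have := hd.1; have := b1 i; simp only at *; linarith
      · have := hd.2; have := b2 i; simp only at *; linarith
    · have hq' := (hassign c q' hc).1
      rw [Psome c q' hc] at hd
      obtain ⟨d1, d2⟩ := hd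
      simp only at d1 d2
      have := b1 i; have := b2 i; have := b1 c; have := b2 c
      by_cases hqq : q' = q
      · subst hqq; nlinarith
      · rcases lt_or_gt_of_ne (hcoord q' hq' q hq hqq).1 with h | h
        · have := (hQ q' hq' q hq).1 h; linarith
        · have h2 : q'.2 < q.2 := by
            rcases lt_or_gt_of_ne (hcoord q' hq' q hq hqq).2 with h' | h'
            · exact h'
            · exact absurd ⟨h, h'⟩ (hnd q' hq' q hq hqq)
          have := (hQ q' hq' q hq).2 h2; linarith
  refine ⟨P, ?_, ?_⟩
  · intro i
    rcases hi : assign i with _ | q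
    · rw [Pnone i hi]
      exact ⟨⟨le_rfl, (F i).hx⟩, ⟨le_rfl, (F i).hy⟩⟩
    · rw [Psome i q hi]
      have hq := hassign i q hi
      have hm := interior_subset hq.2
      obtain ⟨f1, f2⟩ := hF i q hq.1 hi
      obtain ⟨m1, m2⟩ := hm
      have := b1 i; have := b2 i
      have := m1.1; have := m2.1
      refine ⟨⟨?_, ?_⟩, ⟨?_, ?_⟩⟩ <;> simp only <;> linarith
  · intro q i j hi hj
    constructor
    · rintro ⟨-, -, h⟩
      rw [Psome i q hi, Psome j q hj] at h
      simp only at h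
      rcases h with h | h <;> nlinarith
    · intro h
      refine ⟨fun c _ => front i q hi c, fun c _ => front j q hj c, Or.inl ?_⟩
      rw [Psome i q hi, Psome j q hj]
      simp only
      nlinarith

theorem stmt18 {n : ℕ} (F : Fin n → Rect) (Q : Finset (ℝ × ℝ))
    (hcoord : ∀ q ∈ Q, ∀ q' ∈ Q, q ≠ q' → q.1 ≠ q'.1 ∧ q.2 ≠ q'.2)
    (hnd : ∀ q ∈ Q, ∀ q' ∈ Q, q ≠ q' → ¬ dom q q')
    (hIPF : ∀ q ∈ Q, q ∉ IPF F)
    (assign : Fin n → Option (ℝ × ℝ))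
    (hassign : ∀ i q, assign i = some q → q ∈ Q ∧ q ∈ interior (F i).toSet) :
    ∏ q ∈ Q, Nat.factorial ({i : Fin n | assign i = some q}.ncard) ≤
      {r : Fin n → Fin n → Prop |
        ∃ P : Fin n → ℝ × ℝ, IsRealization F P ∧ r = precRel P}.ncard := by
  classical
  have hg : ∀ σ : (∀ q : Q, Equiv.Perm {i : Fin n // assign i = some q.1}),
      ∃ g : Fin n → ℕ, (∀ i, g i ≤ n) ∧
        ∀ (q : Q) i (h : assign i = some q.1), g i = ((σ q ⟨i, h⟩).1 : ℕ) := by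
    intro σ
    have : ∀ i, ∃ m : ℕ, m ≤ n ∧ ∀ (q : Q) (h : assign i = some q.1),
        m = ((σ q ⟨i, h⟩).1 : ℕ) := by
      intro i
      by_cases hex : ∃ q : Q, assign i = some q.1
      · obtain ⟨q, h⟩ := hex
        refine ⟨((σ q ⟨i, h⟩).1 : ℕ), (σ q ⟨i, h⟩).1.2.le, ?_⟩
        intro q' h'
        have : q = q' := Subtype.ext (Option.some.inj (h.symm.trans h'))
        subst this
        rfl
      · exact ⟨0, Nat.zero_le _, fun q h => absurd ⟨q, h⟩ hex⟩
    choose g h1 h2 using this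
    exact ⟨g, h1, fun q i h => h2 i q h⟩
  have hr : ∀ σ : (∀ q : Q, Equiv.Perm {i : Fin n // assign i = some q.1}),
      ∃ P : Fin n → ℝ × ℝ, IsRealization F P ∧
        ∀ (q : Q) (a b : {i : Fin n // assign i = some q.1}),
          precRel P a.1 b.1 ↔ σ q a < σ q b := by
    intro σ
    obtain ⟨g, h1, h2⟩ := hg σ
    have hn : (0 : ℝ) < (n : ℝ) + 1 := by positivity
    obtain ⟨P, hP, hrel⟩ := stmt18_core F Q hcoord hnd hIPF assign hassign
      (fun i => (g i : ℝ) / (n + 1)) (by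
        intro i
        refine ⟨by positivity, ?_⟩
        rw [div_le_one hn]
        have : (g i : ℝ) ≤ n := by exact_mod_cast h1 i
        linarith)
    refine ⟨P, hP, ?_⟩
    intro q a b
    rw [hrel q.1 a.1 b.1 a.2 b.2, div_lt_div_iff_of_pos_right hn, Nat.cast_lt,
      h2 q a.1 a.2, h2 q b.1 b.2]
    rfl
  choose P hP hrel using hr
  have hinj : Function.Injective (fun σ => precRel (P σ)) := by
    intro σ τ hst
    have hst' : precRel (P σ) = precRel (P τ) := hst
    funext q
    have hlt : ∀ a b, σ q a < σ q b ↔ τ q a < τ q b := by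
      intro a b
      rw [← hrel σ q a b, ← hrel τ q a b, hst']
    let e : {i : Fin n // assign i = some q.1} ≃o {i : Fin n // assign i = some q.1} :=
      { toEquiv := (σ q).symm.trans (τ q)
        map_rel_iff' := by
          intro a b
          rw [← not_lt, ← not_lt]
          simp [← hlt] }
    have he : e = OrderIso.refl _ := Subsingleton.elim _ _
    ext1 a
    have := congrArg (fun f => f (σ q a)) he
    simpa [e] using this.symm
  have hcard : Nat.card (∀ q : Q, Equiv.Perm {i : Fin n // assign i = some q.1}) =
      ∏ q ∈ Q, Nat.factorial ({i : Fin n | assign i = some q}.ncard) := by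
    rw [Nat.card_pi, ← Finset.prod_coe_sort Q]
    refine Finset.prod_congr rfl fun q _ => ?_
    rw [Nat.card_perm]
    rfl
  rw [← hcard, ← Set.ncard_univ, ← Set.ncard_image_of_injective _ hinj]
  apply Set.ncard_le_ncard _ (Set.toFinite _)
  rintro _ ⟨σ, -, rfl⟩
  exact ⟨P σ, hP σ, rfl⟩
end
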